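/- Fix l, r ∈ ℝ and let α, β, γ be built from c := |l| + |r|. Assume there exists a real-valued absolutely continuous function g on [a,b] with g(a) = g(b) = 0, ∫ₐᵇ p|g'|² < ∞, and g(x)w(x) > 0 a.e. on (a,b), and let ε > 0 satisfy μ_{1/p}({x ∈ [a,b] : p(x)g(x)w(x) < ε}) ≤ 1/(2γ²). Then every real λ ≠ 0 for which there exists a solution (φ, u) of −(pφ')' + qφ = λwφ with φ not identically zero, u(a) = l·φ(a), u(b) = r·φ(b), and λ·∫ₐᵇ w|φ|² ≤ 0 (a real exceptional eigenvalue), satisfies |λ| ≤ (2/ε)·(β·γ·‖g'‖_{p,2} + (β² + γ²‖q‖_{L¹})·‖g‖_∞). -/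

import Mathlib

open MeasureTheory Real Complex

/-!
Write `N² = ∫ |φ|²/p`, `D² = ∫ |u|²/p`, `P = ∫ 1/p`, and let `M` be the maximum of `|φ|²`. Pairing
the equation with `φ̄` and using the sign of `Re λ · ∫ w|φ|²` gives `D² ≤ αM`. By Cauchy–Schwarz
`|φ|²` oscillates by at most `2ND`, so averaging against `1/p` gives `M ≤ N²/P + 2ND`. These two
inequalities together yield `D ≤ βN` and `M ≤ γ²N²`. Pairing the equation with `gφ̄` instead
expresses `λ ∫ gw|φ|²` by integrals of size `O(N²)`. On the other hand `∫ gw|φ|² ≥ (ε/2)N²`: where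
`pgw ≥ ε` the integrand dominates `ε|φ|²/p`, and the exceptional set, of measure at most `1/(2γ²)`,
carries at most half of `N²` because `|φ|² ≤ γ²N²`.
-/

section Primitive

open Set Topology

variable {E F : Type*} [NormedAddCommGroup E] [NormedSpace ℝ E]
  [NormedAddCommGroup F] [NormedSpace ℝ F] {a b : ℝ}

/-- `F` is a primitive on `[[a, b]]`, in the sense of Lebesgue, of the integrable function `f`: it
is absolutely continuous there with a.e. derivative `f`. The integral equation is the encoding in
which solutions of the Sturm–Liouville equation and their test functions are given. -/
structure IsPrimitiveOn (F f : ℝ → E) (a b : ℝ) : Prop where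
  intervalIntegrable : IntervalIntegrable f volume a b
  eq_add_integral : ∀ x ∈ uIcc a b, F x = F a + ∫ t in a..x, f t

theorem absolutelyContinuousOnInterval_of_dist_le {X Y : Type*} [PseudoMetricSpace X]
    [PseudoMetricSpace Y] {F : ℝ → X} {G : ℝ → Y} (hG : AbsolutelyContinuousOnInterval G a b)
    (h : ∀ x ∈ uIcc a b, ∀ y ∈ uIcc a b, dist (F x) (F y) ≤ dist (G x) (G y)) :
    AbsolutelyContinuousOnInterval F a b := by
  rw [absolutelyContinuousOnInterval_iff] at hG ⊢
  intro ε hε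
  obtain ⟨δ, hδ, hGδ⟩ := hG ε hε
  refine ⟨δ, hδ, fun I hI hIδ => (Finset.sum_le_sum fun i hi => ?_).trans_lt (hGδ I hI hIδ)⟩
  exact h _ (hI.1 i hi).1 _ (hI.1 i hi).2

namespace IsPrimitiveOn

variable {Φ φ Ψ ψ : ℝ → E}

theorem of_integrableOn_Ioc (hab : a ≤ b) (hφ : IntegrableOn φ (Ioc a b))
    (h : ∀ x ∈ Icc a b, Φ x = Φ a + ∫ t in a..x, φ t) : IsPrimitiveOn Φ φ a b :=
  ⟨(intervalIntegrable_iff_integrableOn_Ioc_of_le hab).2 hφ, by rwa [uIcc_of_le hab]⟩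

theorem integral_eq_sub (h : IsPrimitiveOn Φ φ a b) {x y : ℝ} (hx : x ∈ uIcc a b)
    (hy : y ∈ uIcc a b) : ∫ t in x..y, φ t = Φ y - Φ x := by
  have integrable_to : ∀ z ∈ uIcc a b, IntervalIntegrable φ volume a z := fun z hz =>
    h.intervalIntegrable.mono_set (uIcc_subset_uIcc_left hz)
  rw [h.eq_add_integral x hx, h.eq_add_integral y hy, add_sub_add_left_eq_sub,
    intervalIntegral.integral_interval_sub_left (integrable_to y hy) (integrable_to x hx)]

theorem norm_sub_le (h : IsPrimitiveOn Φ φ a b) (hab : a ≤ b) {x y : ℝ} (hx : x ∈ Icc a b)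
    (hy : y ∈ Icc a b) : ‖Φ x - Φ y‖ ≤ ∫ t in a..b, ‖φ t‖ := by
  rw [← uIcc_of_le hab] at hx hy
  rw [← h.integral_eq_sub hy hx]
  refine (intervalIntegral.norm_integral_le_abs_integral_norm).trans ?_
  rw [← abs_of_nonneg (intervalIntegral.integral_nonneg hab fun t _ => norm_nonneg (φ t))]
  exact intervalIntegral.abs_integral_mono_interval
    (uIoc_subset_uIoc_of_uIcc_subset_uIcc (uIcc_subset_uIcc hy hx))
    (Filter.Eventually.of_forall fun t => norm_nonneg (φ t)) h.intervalIntegrable.norm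

theorem absolutelyContinuousOnInterval (h : IsPrimitiveOn Φ φ a b) :
    AbsolutelyContinuousOnInterval Φ a b := by
  have hnorm := h.intervalIntegrable.norm
  have integrable_to : ∀ z ∈ uIcc a b, IntervalIntegrable (‖φ ·‖) volume a z := fun z hz =>
    hnorm.mono_set (uIcc_subset_uIcc_left hz)
  refine absolutelyContinuousOnInterval_of_dist_le
    (hnorm.absolutelyContinuousOnInterval_intervalIntegral left_mem_uIcc) fun x hx y hy => ?_
  rw [dist_eq_norm, dist_eq_norm, ← h.integral_eq_sub hy hx,
    intervalIntegral.integral_interval_sub_left (integrable_to x hx) (integrable_to y hy)]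
  exact intervalIntegral.norm_integral_le_abs_integral_norm

theorem continuousOn (h : IsPrimitiveOn Φ φ a b) : ContinuousOn Φ (uIcc a b) :=
  h.absolutelyContinuousOnInterval.continuousOn

theorem ae_hasDerivAt [CompleteSpace E] (h : IsPrimitiveOn Φ φ a b) :
    ∀ᵐ x, x ∈ uIcc a b → HasDerivAt Φ (φ x) x := by
  filter_upwards [h.intervalIntegrable.ae_hasDerivAt_integral,
    Measure.ae_ne volume (min a b), Measure.ae_ne volume (max a b)] with x hderiv hmin hmax hx
  have hnhds : uIcc a b ∈ 𝓝 x := Icc_mem_nhds (hx.1.lt_of_ne' hmin) (hx.2.lt_of_ne hmax)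
  refine ((hderiv hx a left_mem_uIcc).const_add (Φ a)).congr_of_eventuallyEq ?_
  filter_upwards [hnhds] with y hy using h.eq_add_integral y hy

theorem of_ae_hasDerivAt [CompleteSpace E] (hΦ : AbsolutelyContinuousOnInterval Φ a b)
    (hφ : IntervalIntegrable φ volume a b)
    (hderiv : ∀ᵐ x, x ∈ uIcc a b → HasDerivAt Φ (φ x) x) : IsPrimitiveOn Φ φ a b := by
  let I : ℝ → E := fun x => ∫ t in a..x, φ t
  have hI : IsPrimitiveOn I φ a b := ⟨hφ, fun x _ => by simp [I]⟩
  have hzero : ∀ᵐ x, x ∈ uIcc a b → HasDerivAt (Φ - I) 0 x := by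
    filter_upwards [hderiv, hI.ae_hasDerivAt] with x hΦx hIx hx
    simpa using (hΦx hx).sub (hIx hx)
  obtain ⟨C, hC⟩ :=
    (hΦ.sub hI.absolutelyContinuousOnInterval).const_of_ae_hasDerivAt_zero hzero
  refine ⟨hφ, fun x hx => ?_⟩
  have hCx : Φ x - I x = C := hC x hx
  have hCa : Φ a = C := by simpa [I] using hC a left_mem_uIcc
  rw [hCa, ← hCx, sub_add_cancel]

theorem clm_comp [CompleteSpace E] [CompleteSpace F] (h : IsPrimitiveOn Φ φ a b)
    (L : E →L[ℝ] F) : IsPrimitiveOn (fun x => L (Φ x)) (fun x => L (φ x)) a b := by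
  refine ⟨⟨L.integrable_comp h.intervalIntegrable.1, L.integrable_comp h.intervalIntegrable.2⟩,
    fun x hx => ?_⟩
  rw [L.intervalIntegral_comp_comm (h.intervalIntegrable.mono_set (uIcc_subset_uIcc_left hx)),
    ← map_add, ← h.eq_add_integral x hx]

theorem smul {𝕜 : Type*} [NormedRing 𝕜] [NormedAlgebra ℝ 𝕜] [CompleteSpace 𝕜] [CompleteSpace E]
    [Module 𝕜 E] [NormSMulClass 𝕜 E] [IsScalarTower ℝ 𝕜 E] {C c : ℝ → 𝕜}
    (hC : IsPrimitiveOn C c a b) (hΦ : IsPrimitiveOn Φ φ a b) :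
    IsPrimitiveOn (fun x => C x • Φ x) (fun x => C x • φ x + c x • Φ x) a b := by
  refine of_ae_hasDerivAt
    (hC.absolutelyContinuousOnInterval.smul hΦ.absolutelyContinuousOnInterval)
    ((hΦ.intervalIntegrable.continuousOn_smul hC.continuousOn).add
      (hC.intervalIntegrable.smul_continuousOn hΦ.continuousOn)) ?_
  filter_upwards [hC.ae_hasDerivAt, hΦ.ae_hasDerivAt] with x hCx hΦx hx
  exact (hCx hx).smul (hΦx hx)

end IsPrimitiveOn

end Primitive

section CauchySchwarz

variable {X E : Type*} [MeasurableSpace X] {μ : Measure X} [NormedAddCommGroup E]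

theorem integral_norm_le_sqrt_mul_sqrt {h : X → E} {A B : X → ℝ} (hA : Integrable A μ)
    (hB : Integrable B μ) (hA0 : 0 ≤ᵐ[μ] A) (hB0 : 0 ≤ᵐ[μ] B)
    (hh : ∀ᵐ x ∂μ, ‖h x‖ ^ 2 ≤ A x * B x) :
    ∫ x, ‖h x‖ ∂μ ≤ √(∫ x, A x ∂μ) * √(∫ x, B x ∂μ) := by
  have memLp_sqrt {C : X → ℝ} (hC : Integrable C μ) (hC0 : 0 ≤ᵐ[μ] C) :
      MemLp (fun x => √(C x)) 2 μ := by
    rw [memLp_two_iff_integrable_sq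
      (Real.continuous_sqrt.comp_aestronglyMeasurable hC.aestronglyMeasurable)]
    refine hC.congr ?_
    filter_upwards [hC0] with x hx using (Real.sq_sqrt hx).symm
  have integral_sqrt_sq {C : X → ℝ} (hC0 : 0 ≤ᵐ[μ] C) :
      ∫ x, √(C x) ^ (2 : ℝ) ∂μ = ∫ x, C x ∂μ := by
    refine integral_congr_ae ?_
    filter_upwards [hC0] with x hx
    rw [Real.rpow_two, Real.sq_sqrt hx]
  have memA := memLp_sqrt hA hA0
  have memB := memLp_sqrt hB hB0
  calc ∫ x, ‖h x‖ ∂μ ≤ ∫ x, √(A x) * √(B x) ∂μ := by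
        refine integral_mono_of_nonneg (.of_forall fun x => norm_nonneg (h x))
          (memA.integrable_mul memB) ?_
        filter_upwards [hA0, hh] with x hAx hhx
        rw [← Real.sqrt_mul hAx]
        exact Real.le_sqrt_of_sq_le hhx
    _ ≤ _ := by
        have holder := integral_mul_le_Lp_mul_Lq_of_nonneg Real.HolderConjugate.two_two
          (.of_forall fun x => Real.sqrt_nonneg (A x)) (.of_forall fun x => Real.sqrt_nonneg (B x))
          (by simpa using memA) (by simpa using memB)
        rwa [integral_sqrt_sq hA0, integral_sqrt_sq hB0, ← Real.sqrt_eq_rpow,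
          ← Real.sqrt_eq_rpow] at holder

end CauchySchwarz

section WithDensity

variable {X : Type*} [MeasurableSpace X] {μ : Measure X} {ρ f h : X → ℝ} {S : Set X} {M δ : ℝ}

theorem setIntegral_le_of_withDensity_le (hρ : Integrable ρ μ) (hρ0 : 0 ≤ᵐ[μ] ρ) (hδ : 0 ≤ δ)
    (hS : MeasurableSet S)
    (hSδ : (μ.withDensity fun x => ENNReal.ofReal (ρ x)) S ≤ ENNReal.ofReal δ) :
    ∫ x in S, ρ x ∂μ ≤ δ := by
  rw [withDensity_apply _ hS, ← ofReal_integral_eq_lintegral_ofReal hρ.restrict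
    (ae_restrict_of_ae hρ0)] at hSδ
  exact (ENNReal.ofReal_le_ofReal_iff hδ).1 hSδ

theorem integral_mul_le_of_withDensity_le (hρ : Integrable ρ μ) (hρ0 : 0 ≤ᵐ[μ] ρ)
    (hf0 : 0 ≤ᵐ[μ] f) (hM : 0 ≤ M) (hfM : ∀ᵐ x ∂μ, f x ≤ M) (hδ : 0 ≤ δ)
    (hSδ : (μ.withDensity fun x => ENNReal.ofReal (ρ x)) S ≤ ENNReal.ofReal δ)
    (hh : Integrable h μ) (hh0 : 0 ≤ᵐ[μ] h) (hfh : ∀ᵐ x ∂μ, x ∉ S → ρ x * f x ≤ h x) :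
    ∫ x, ρ x * f x ∂μ ≤ δ * M + ∫ x, h x ∂μ := by
  -- The measurable hull has the same measure, so that `S` itself need not be measurable.
  set T := toMeasurable (μ.withDensity fun x => ENNReal.ofReal (ρ x)) S with hT
  have hTmeas : MeasurableSet T := measurableSet_toMeasurable _ _
  have hTδ : ∫ x in T, ρ x ∂μ ≤ δ :=
    setIntegral_le_of_withDensity_le hρ hρ0 hδ hTmeas (by rwa [hT, measure_toMeasurable])
  have hTint : Integrable (T.indicator ρ) μ := hρ.indicator hTmeas
  calc ∫ x, ρ x * f x ∂μ ≤ ∫ x, (T.indicator ρ x * M + h x) ∂μ := by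
        refine integral_mono_of_nonneg (by filter_upwards [hρ0, hf0] with x using mul_nonneg)
          ((hTint.mul_const M).add hh) ?_
        filter_upwards [hρ0, hfM, hh0, hfh] with x hρx hfx hhx hfhx
        by_cases hx : x ∈ T
        · rw [Set.indicator_of_mem hx]
          exact le_add_of_le_of_nonneg (mul_le_mul_of_nonneg_left hfx hρx) hhx
        · rw [Set.indicator_of_notMem hx, zero_mul, zero_add]
          exact hfhx fun hxS => hx (subset_toMeasurable _ _ hxS)
    _ = (∫ x in T, ρ x ∂μ) * M + ∫ x, h x ∂μ := by
        rw [integral_add (hTint.mul_const M) hh, integral_mul_const, integral_indicator hTmeas]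
    _ ≤ δ * M + ∫ x, h x ∂μ := by gcongr

theorem integral_mul_le_two_mul_of_withDensity_le {K : ℝ} (hρ : Integrable ρ μ)
    (hρ0 : 0 ≤ᵐ[μ] ρ) (hf0 : 0 ≤ᵐ[μ] f) (hK : 0 < K)
    (hfK : ∀ᵐ x ∂μ, f x ≤ K * ∫ y, ρ y * f y ∂μ)
    (hSK : (μ.withDensity fun x => ENNReal.ofReal (ρ x)) S ≤ ENNReal.ofReal (1 / (2 * K)))
    (hh : Integrable h μ) (hh0 : 0 ≤ᵐ[μ] h) (hfh : ∀ᵐ x ∂μ, x ∉ S → ρ x * f x ≤ h x) :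
    ∫ x, ρ x * f x ∂μ ≤ 2 * ∫ x, h x ∂μ := by
  have hρf : 0 ≤ ∫ x, ρ x * f x ∂μ :=
    integral_nonneg_of_ae (by filter_upwards [hρ0, hf0] with x using mul_nonneg)
  have hsplit := integral_mul_le_of_withDensity_le hρ hρ0 hf0 (by positivity) hfK (by positivity)
    hSK hh hh0 hfh
  have hhalf : 1 / (2 * K) * (K * ∫ x, ρ x * f x ∂μ) = (∫ x, ρ x * f x ∂μ) / 2 := by field_simp
  linarith

end WithDensity

section WeightedNorm

open Set ComplexConjugate

variable {a b : ℝ} {ρ : ℝ → ℝ}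

/-- The norm of `f` in the weighted space `L²([a, b]; ρ dx)`, for `a ≤ b` and `0 ≤ ρ`; it is `0`
when `ρ‖f‖²` is not integrable. The estimates below compare these norms of a solution and of its
quasi-derivative for `ρ = 1 / p`. -/
noncomputable def weightedL2Norm {E : Type*} [Norm E] (ρ : ℝ → ℝ) (a b : ℝ) (f : ℝ → E) : ℝ :=
  √(∫ t in a..b, ρ t * ‖f t‖ ^ 2)

theorem weightedL2Norm_nonneg {E : Type*} [Norm E] (f : ℝ → E) : 0 ≤ weightedL2Norm ρ a b f :=
  Real.sqrt_nonneg _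

theorem sq_weightedL2Norm {E : Type*} [Norm E] (hab : a ≤ b)
    (hρ0 : 0 ≤ᵐ[volume.restrict (Ioc a b)] ρ) (f : ℝ → E) :
    weightedL2Norm ρ a b f ^ 2 = ∫ t in a..b, ρ t * ‖f t‖ ^ 2 := by
  refine Real.sq_sqrt ?_
  rw [intervalIntegral.integral_of_le hab]
  refine integral_nonneg_of_ae ?_
  filter_upwards [hρ0] with t ht using mul_nonneg ht (sq_nonneg _)

theorem intervalIntegral_pos_of_ae_pos (hab : a < b) (hρ : IntervalIntegrable ρ volume a b)
    (hρ0 : ∀ᵐ x ∂volume.restrict (Ioc a b), 0 < ρ x) : 0 < ∫ t in a..b, ρ t := by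
  have : (ae (volume.restrict (Ioc a b))).NeBot := ae_restrict_neBot.2 (by simpa using hab)
  rw [intervalIntegral.integral_of_le hab.le,
    integral_pos_iff_support_of_nonneg_ae (hρ0.mono fun x => le_of_lt) hρ.1]
  exact (frequently_ae_iff.1 (hρ0.mono fun x hx => hx.ne').frequently).bot_lt

namespace IsPrimitiveOn

variable {φ φ' u : ℝ → ℂ}

theorem conj_comp (hφ : IsPrimitiveOn φ φ' a b) :
    IsPrimitiveOn (fun x => conj (φ x)) (fun x => conj (φ' x)) a b :=
  hφ.clm_comp (conjCLE : ℂ →L[ℝ] ℂ)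

theorem sq_norm (hφ : IsPrimitiveOn φ φ' a b) :
    IsPrimitiveOn (fun x => ‖φ x‖ ^ 2) (fun x => 2 * (φ x * conj (φ' x)).re) a b := by
  convert (hφ.smul hφ.conj_comp).clm_comp reCLM using 1 <;> funext x
  · simp [Complex.mul_conj', ← Complex.ofReal_pow]
  · simp only [reCLM_apply, smul_eq_mul, Complex.add_re, Complex.mul_re, Complex.conj_re,
      Complex.conj_im]
    ring

theorem sq_norm_sub_sq_norm_le (hab : a ≤ b) (hρ : IntervalIntegrable ρ volume a b)
    (hρ0 : 0 ≤ᵐ[volume.restrict (Ioc a b)] ρ)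
    (hφ : IsPrimitiveOn φ (fun t => ρ t • u t) a b) (hu : ContinuousOn u (uIcc a b)) {x y : ℝ}
    (hx : x ∈ Icc a b) (hy : y ∈ Icc a b) :
    ‖φ x‖ ^ 2 - ‖φ y‖ ^ 2 ≤ 2 * (weightedL2Norm ρ a b φ * weightedL2Norm ρ a b u) := by
  calc ‖φ x‖ ^ 2 - ‖φ y‖ ^ 2 ≤ ‖‖φ x‖ ^ 2 - ‖φ y‖ ^ 2‖ := Real.le_norm_self _
    _ ≤ ∫ t in a..b, ‖2 * (φ t * conj (ρ t • u t)).re‖ := hφ.sq_norm.norm_sub_le hab hx hy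
    _ = 2 * ∫ t in a..b, ‖(φ t * conj (ρ t • u t)).re‖ := by
        simp only [norm_mul, Real.norm_ofNat, intervalIntegral.integral_const_mul]
    _ ≤ 2 * (weightedL2Norm ρ a b φ * weightedL2Norm ρ a b u) := by
        simp only [weightedL2Norm, intervalIntegral.integral_of_le hab]
        gcongr
        refine integral_norm_le_sqrt_mul_sqrt (hρ.mul_continuousOn (hφ.continuousOn.norm.pow 2)).1
          (hρ.mul_continuousOn (hu.norm.pow 2)).1 ?_ ?_ ?_
        · filter_upwards [hρ0] with t ht using mul_nonneg ht (sq_nonneg _)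
        · filter_upwards [hρ0] with t ht using mul_nonneg ht (sq_nonneg _)
        · refine .of_forall fun t => ?_
          calc ‖(φ t * conj (ρ t • u t)).re‖ ^ 2 ≤ ‖φ t * conj (ρ t • u t)‖ ^ 2 := by
                gcongr
                exact Complex.abs_re_le_norm _
            _ = (‖φ t‖ * (|ρ t| * ‖u t‖)) ^ 2 := by simp
            _ = ρ t * ‖φ t‖ ^ 2 * (ρ t * ‖u t‖ ^ 2) := by
                rw [mul_pow, mul_pow, sq_abs]
                ring

theorem sq_norm_mul_integral_le (hab : a ≤ b) (hρ : IntervalIntegrable ρ volume a b)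
    (hρ0 : 0 ≤ᵐ[volume.restrict (Ioc a b)] ρ)
    (hφ : IsPrimitiveOn φ (fun t => ρ t • u t) a b) (hu : ContinuousOn u (uIcc a b)) {x : ℝ}
    (hx : x ∈ Icc a b) :
    ‖φ x‖ ^ 2 * (∫ t in a..b, ρ t) ≤ weightedL2Norm ρ a b φ ^ 2
      + 2 * (weightedL2Norm ρ a b φ * weightedL2Norm ρ a b u) * ∫ t in a..b, ρ t := by
  set C := 2 * (weightedL2Norm ρ a b φ * weightedL2Norm ρ a b u)
  have hφint : IntervalIntegrable (fun t => ρ t * ‖φ t‖ ^ 2) volume a b :=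
    hρ.mul_continuousOn (hφ.continuousOn.norm.pow 2)
  calc ‖φ x‖ ^ 2 * (∫ t in a..b, ρ t) = ∫ t in a..b, ‖φ x‖ ^ 2 * ρ t :=
        (intervalIntegral.integral_const_mul _ _).symm
    _ ≤ ∫ t in a..b, (ρ t * ‖φ t‖ ^ 2 + C * ρ t) := by
        simp only [intervalIntegral.integral_of_le hab]
        refine integral_mono_ae (hρ.1.const_mul _) (hφint.1.add (hρ.1.const_mul _)) ?_
        filter_upwards [hρ0, ae_restrict_mem measurableSet_Ioc] with t hρt ht
        have hosc := sq_norm_sub_sq_norm_le hab hρ hρ0 hφ hu hx (Ioc_subset_Icc_self ht)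
        calc ‖φ x‖ ^ 2 * ρ t ≤ (‖φ t‖ ^ 2 + C) * ρ t :=
              mul_le_mul_of_nonneg_right (by linarith) hρt
          _ = ρ t * ‖φ t‖ ^ 2 + C * ρ t := by ring
    _ = weightedL2Norm ρ a b φ ^ 2 + C * ∫ t in a..b, ρ t := by
        rw [intervalIntegral.integral_add hφint (hρ.const_mul _),
          intervalIntegral.integral_const_mul, sq_weightedL2Norm hab hρ0]

end IsPrimitiveOn

end WeightedNorm

section SturmLiouville

open Set ComplexConjugate

/-- `(φ, u)` solves the Sturm–Liouville equation `-(p φ')' + q φ = lam w φ` on `[a, b]`, written as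
a first-order system in which `u` is the quasi-derivative `p φ'`. -/
structure IsSturmLiouvilleSolution (p q w : ℝ → ℝ) (lam : ℂ) (a b : ℝ) (φ u : ℝ → ℂ) : Prop where
  isPrimitiveOn : IsPrimitiveOn φ (fun t => (1 / p t) • u t) a b
  isPrimitiveOn_quasiDeriv : IsPrimitiveOn u (fun t => ((q t : ℂ) - lam * w t) * φ t) a b

theorem intervalIntegrable_ofReal {f : ℝ → ℝ} {a b : ℝ} (hf : IntervalIntegrable f volume a b) :
    IntervalIntegrable (fun t => (f t : ℂ)) volume a b :=
  ⟨hf.1.ofReal, hf.2.ofReal⟩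

theorem le_mul_of_sq_le_of_mul_le {α P M N D : ℝ} (hα : 0 ≤ α) (hP : 0 < P) (hN : 0 ≤ N)
    (hDM : D ^ 2 ≤ α * M) (hMP : M * P ≤ N ^ 2 + 2 * (N * D) * P) :
    D ≤ (√(α * (1 / P + α)) + α) * N := by
  have hM : M ≤ N ^ 2 / P + 2 * (N * D) := by
    rw [← mul_le_mul_iff_left₀ hP]
    field_simp
    linarith
  have hsq : (D - α * N) ^ 2 ≤ α * (1 / P + α) * N ^ 2 := by
    have hαM := mul_le_mul_of_nonneg_left hM hα
    calc (D - α * N) ^ 2 = D ^ 2 - 2 * α * (N * D) + α ^ 2 * N ^ 2 := by ring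
      _ ≤ α * (N ^ 2 / P + 2 * (N * D)) - 2 * α * (N * D) + α ^ 2 * N ^ 2 := by linarith
      _ = α * (1 / P + α) * N ^ 2 := by ring
  have hsqrt := (le_abs_self _).trans (Real.abs_le_sqrt hsq)
  rw [Real.sqrt_mul (by positivity), Real.sqrt_sq hN] at hsqrt
  linarith

theorem le_mul_sq_of_mul_le {β P M N D : ℝ} (hP : 0 < P) (hN : 0 ≤ N) (hD : D ≤ β * N)
    (hMP : M * P ≤ N ^ 2 + 2 * (N * D) * P) : M ≤ (2 * β + 1 / P) * N ^ 2 := by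
  rw [← mul_le_mul_iff_left₀ hP]
  calc M * P ≤ N ^ 2 + 2 * (N * D) * P := hMP
    _ ≤ N ^ 2 + 2 * (N * (β * N)) * P := by gcongr
    _ = (2 * β + 1 / P) * N ^ 2 * P := by
        field_simp
        ring

theorem abs_integral_mul_le {f F g : ℝ → ℝ} {a b B : ℝ} (hab : a ≤ b)
    (hF : IntervalIntegrable F volume a b) (hg : ∀ x ∈ Icc a b, |g x| ≤ B)
    (hf : ∀ᵐ x ∂volume.restrict (Ioc a b), |f x| ≤ F x) :
    |∫ t in a..b, g t * f t| ≤ B * ∫ t in a..b, F t := by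
  rw [← intervalIntegral.integral_const_mul, ← Real.norm_eq_abs]
  refine intervalIntegral.norm_integral_le_of_norm_le hab ?_ (hF.const_mul B)
  filter_upwards [(ae_restrict_iff' measurableSet_Ioc).1 hf] with t hft ht
  rw [norm_mul]
  have hgt := hg t (Ioc_subset_Icc_self ht)
  exact mul_le_mul hgt (hft ht) (norm_nonneg _) ((abs_nonneg _).trans hgt)

theorem half_mul_sq_weightedL2Norm_le {p g w : ℝ → ℝ} {φ : ℝ → ℂ} {a b ε K : ℝ} (hab : a ≤ b)
    (hp_pos : ∀ᵐ x ∂volume.restrict (Ioc a b), 0 < p x)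
    (hp : IntervalIntegrable (fun t => 1 / p t) volume a b)
    (hgw : ∀ᵐ x ∂volume.restrict (Ioc a b), 0 < g x * w x)
    (hgwφ : IntervalIntegrable (fun t => g t * (w t * ‖φ t‖ ^ 2)) volume a b) (hε : 0 < ε)
    (hK : 0 < K)
    (hεcond : (volume.withDensity fun x => ENNReal.ofReal (1 / p x))
        {x | x ∈ Icc a b ∧ p x * g x * w x < ε} ≤ ENNReal.ofReal (1 / (2 * K)))
    (hsup : ∀ x ∈ Icc a b, ‖φ x‖ ^ 2 ≤ K * weightedL2Norm (fun t => 1 / p t) a b φ ^ 2) :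
    ε / 2 * weightedL2Norm (fun t => 1 / p t) a b φ ^ 2
      ≤ ∫ t in a..b, g t * (w t * ‖φ t‖ ^ 2) := by
  have hp0 : 0 ≤ᵐ[volume.restrict (Ioc a b)] fun t => 1 / p t :=
    hp_pos.mono fun t ht => one_div_nonneg.2 ht.le
  have hmem := ae_restrict_mem (μ := volume) (measurableSet_Ioc (a := a) (b := b))
  rw [sq_weightedL2Norm hab hp0] at hsup ⊢
  simp only [intervalIntegral.integral_of_le hab] at hsup ⊢
  have hhalf : ∫ t in Ioc a b, 1 / p t * ‖φ t‖ ^ 2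
      ≤ 2 * ∫ t in Ioc a b, ε⁻¹ * (g t * (w t * ‖φ t‖ ^ 2)) := by
    refine integral_mul_le_two_mul_of_withDensity_le hp.1 hp0 (.of_forall fun t => sq_nonneg _) hK
      (hmem.mono fun t ht => hsup t (Ioc_subset_Icc_self ht)) ?_ (hgwφ.1.const_mul _) ?_ ?_
      (S := {x | x ∈ Icc a b ∧ p x * g x * w x < ε})
    · rw [← restrict_withDensity measurableSet_Ioc]
      exact (Measure.restrict_apply_le _ _).trans hεcond
    · filter_upwards [hgw] with t ht
      refine mul_nonneg (inv_nonneg.2 hε.le) ?_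
      rw [← mul_assoc]
      exact mul_nonneg ht.le (sq_nonneg _)
    · filter_upwards [hp_pos, hmem] with t hpt ht htS
      have hεt : ε ≤ p t * g t * w t := not_lt.1 fun hlt => htS ⟨Ioc_subset_Icc_self ht, hlt⟩
      calc 1 / p t * ‖φ t‖ ^ 2 = ε⁻¹ * (ε / p t * ‖φ t‖ ^ 2) := by field_simp
        _ ≤ ε⁻¹ * (p t * g t * w t / p t * ‖φ t‖ ^ 2) := by gcongr
        _ = ε⁻¹ * (g t * (w t * ‖φ t‖ ^ 2)) := by field_simp
  rw [integral_const_mul] at hhalf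
  calc _ ≤ ε / 2 * (2 * (ε⁻¹ * ∫ t in Ioc a b, g t * (w t * ‖φ t‖ ^ 2))) := by gcongr
    _ = _ := by field_simp

namespace IsSturmLiouvilleSolution

variable {a b : ℝ} {p q w : ℝ → ℝ} {lam : ℂ} {φ u : ℝ → ℂ}

theorem of_continuousOn (hab : a ≤ b) (hp : IntervalIntegrable (fun t => 1 / p t) volume a b)
    (hq : IntervalIntegrable q volume a b) (hw : IntervalIntegrable w volume a b)
    (hu : ContinuousOn u (Icc a b))
    (hφeq : ∀ x ∈ Icc a b, φ x = φ a + ∫ t in a..x, u t / (p t : ℂ))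
    (hueq : ∀ x ∈ Icc a b, u x = u a + ∫ t in a..x, ((q t : ℂ) - lam * (w t : ℂ)) * φ t) :
    IsSturmLiouvilleSolution p q w lam a b φ u := by
  rw [← uIcc_of_le hab] at hu hφeq hueq
  have hdiv (t : ℝ) : u t / (p t : ℂ) = (1 / p t) • u t := by
    simp [div_eq_inv_mul]
  simp only [hdiv] at hφeq
  have hφ : IsPrimitiveOn φ (fun t => (1 / p t) • u t) a b := ⟨hp.smul_continuousOn hu, hφeq⟩
  have hcoeff : IntervalIntegrable (fun t => (q t : ℂ) - lam * w t) volume a b :=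
    (intervalIntegrable_ofReal hq).sub ((intervalIntegrable_ofReal hw).const_mul lam)
  exact ⟨hφ, hcoeff.mul_continuousOn hφ.continuousOn, hueq⟩

theorem isPrimitiveOn_mul_conj (h : IsSturmLiouvilleSolution p q w lam a b φ u) :
    IsPrimitiveOn (fun x => u x * conj (φ x))
      (fun x => ((1 / p x * ‖u x‖ ^ 2 + q x * ‖φ x‖ ^ 2 : ℝ) : ℂ)
        - lam * ((w x * ‖φ x‖ ^ 2 : ℝ) : ℂ)) a b := by
  convert h.isPrimitiveOn_quasiDeriv.smul h.isPrimitiveOn.conj_comp using 1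
  · simp only [smul_eq_mul]
  · funext x
    simp only [Complex.real_smul, smul_eq_mul, map_mul, Complex.conj_ofReal]
    push_cast [← Complex.mul_conj']
    ring

theorem intervalIntegrable_potential (h : IsSturmLiouvilleSolution p q w lam a b φ u) {v : ℝ → ℝ}
    (hv : IntervalIntegrable v volume a b) :
    IntervalIntegrable (fun t => v t * ‖φ t‖ ^ 2) volume a b :=
  hv.mul_continuousOn (h.isPrimitiveOn.continuousOn.norm.pow 2)

theorem intervalIntegrable_kinetic (h : IsSturmLiouvilleSolution p q w lam a b φ u) {v : ℝ → ℝ}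
    (hv : IntervalIntegrable v volume a b) :
    IntervalIntegrable (fun t => v t * ‖u t‖ ^ 2) volume a b :=
  hv.mul_continuousOn (h.isPrimitiveOn_quasiDeriv.continuousOn.norm.pow 2)

theorem energy_identity (h : IsSturmLiouvilleSolution p q w lam a b φ u)
    (hp : IntervalIntegrable (fun t => 1 / p t) volume a b)
    (hq : IntervalIntegrable q volume a b) (hw : IntervalIntegrable w volume a b) :
    (((∫ t in a..b, 1 / p t * ‖u t‖ ^ 2) + ∫ t in a..b, q t * ‖φ t‖ ^ 2 : ℝ) : ℂ)
        - lam * ((∫ t in a..b, w t * ‖φ t‖ ^ 2 : ℝ) : ℂ)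
      = u b * conj (φ b) - u a * conj (φ a) := by
  have hU := h.intervalIntegrable_kinetic hp
  have hQ := h.intervalIntegrable_potential hq
  have hW := h.intervalIntegrable_potential hw
  rw [← h.isPrimitiveOn_mul_conj.integral_eq_sub left_mem_uIcc right_mem_uIcc,
    intervalIntegral.integral_sub (intervalIntegrable_ofReal (hU.add hQ))
      ((intervalIntegrable_ofReal hW).const_mul lam),
    intervalIntegral.integral_const_mul, intervalIntegral.integral_ofReal,
    intervalIntegral.integral_ofReal, intervalIntegral.integral_add hU hQ]

theorem weighted_energy_identity (h : IsSturmLiouvilleSolution p q w lam a b φ u)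
    (hp : IntervalIntegrable (fun t => 1 / p t) volume a b)
    (hq : IntervalIntegrable q volume a b) (hw : IntervalIntegrable w volume a b)
    {g g' : ℝ → ℝ} (hg : IsPrimitiveOn g g' a b) (hga : g a = 0) (hgb : g b = 0) :
    lam * ((∫ t in a..b, g t * (w t * ‖φ t‖ ^ 2) : ℝ) : ℂ)
      = (∫ t in a..b, g' t • (u t * conj (φ t)))
        + ((∫ t in a..b, g t * (1 / p t * ‖u t‖ ^ 2))
          + ∫ t in a..b, g t * (q t * ‖φ t‖ ^ 2) : ℝ) := by
  have hU := (h.intervalIntegrable_kinetic hp).continuousOn_mul hg.continuousOn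
  have hQ := (h.intervalIntegrable_potential hq).continuousOn_mul hg.continuousOn
  have hW := (h.intervalIntegrable_potential hw).continuousOn_mul hg.continuousOn
  have hK := hg.intervalIntegrable.smul_continuousOn h.isPrimitiveOn_mul_conj.continuousOn
  have hzero := (hg.smul h.isPrimitiveOn_mul_conj).integral_eq_sub left_mem_uIcc right_mem_uIcc
  have hsplit (t : ℝ) : g t • (((1 / p t * ‖u t‖ ^ 2 + q t * ‖φ t‖ ^ 2 : ℝ) : ℂ)
        - lam * ((w t * ‖φ t‖ ^ 2 : ℝ) : ℂ)) + g' t • (u t * conj (φ t))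
      = ((g t * (1 / p t * ‖u t‖ ^ 2) + g t * (q t * ‖φ t‖ ^ 2) : ℝ) : ℂ)
        - lam * ((g t * (w t * ‖φ t‖ ^ 2) : ℝ) : ℂ) + g' t • (u t * conj (φ t)) := by
    rw [Complex.real_smul]
    push_cast
    ring
  have hE := intervalIntegrable_ofReal (hU.add hQ)
  have hlamW := (intervalIntegrable_ofReal hW).const_mul lam
  simp only [hsplit, hga, hgb, zero_smul, sub_zero] at hzero
  rw [intervalIntegral.integral_add (hE.sub hlamW) hK, intervalIntegral.integral_sub hE hlamW,
    intervalIntegral.integral_const_mul, intervalIntegral.integral_ofReal,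
    intervalIntegral.integral_ofReal, intervalIntegral.integral_add hU hQ] at hzero
  linear_combination -hzero

theorem neg_integral_potential_le (h : IsSturmLiouvilleSolution p q w lam a b φ u) (hab : a ≤ b)
    (hq : IntervalIntegrable q volume a b) {M : ℝ} (hM : ∀ x ∈ Icc a b, ‖φ x‖ ^ 2 ≤ M) :
    -∫ t in a..b, q t * ‖φ t‖ ^ 2 ≤ (∫ t in a..b, |min (q t) 0|) * M := by
  have hqneg : IntervalIntegrable (fun t => |min (q t) 0|) volume a b :=
    IntervalIntegrable.abs ⟨hq.1.inf (integrable_zero ..), hq.2.inf (integrable_zero ..)⟩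
  rw [← intervalIntegral.integral_neg, ← intervalIntegral.integral_mul_const]
  refine intervalIntegral.integral_mono_on hab (h.intervalIntegrable_potential hq).neg
    (hqneg.mul_const M) fun t ht => ?_
  calc -(q t * ‖φ t‖ ^ 2) = -q t * ‖φ t‖ ^ 2 := (neg_mul _ _).symm
    _ ≤ |min (q t) 0| * ‖φ t‖ ^ 2 := by
        gcongr
        exact (neg_le_neg (min_le_left _ _)).trans (neg_le_abs _)
    _ ≤ |min (q t) 0| * M := by
        gcongr
        exact hM t ht

theorem sq_weightedL2Norm_quasiDeriv_le (h : IsSturmLiouvilleSolution p q w lam a b φ u)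
    (hab : a ≤ b) (hp0 : 0 ≤ᵐ[volume.restrict (Ioc a b)] fun t => 1 / p t)
    (hp : IntervalIntegrable (fun t => 1 / p t) volume a b)
    (hq : IntervalIntegrable q volume a b) (hw : IntervalIntegrable w volume a b) {l r : ℂ}
    (hua : u a = l * φ a) (hub : u b = r * φ b)
    (hsign : lam.re * ∫ t in a..b, w t * ‖φ t‖ ^ 2 ≤ 0) {M : ℝ}
    (hM : ∀ x ∈ Icc a b, ‖φ x‖ ^ 2 ≤ M) :
    weightedL2Norm (fun t => 1 / p t) a b u ^ 2
      ≤ (‖l‖ + ‖r‖ + ∫ t in a..b, |min (q t) 0|) * M := by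
  have henergy := congrArg Complex.re (h.energy_identity hp hq hw)
  rw [hua, hub, mul_assoc, mul_assoc, Complex.mul_conj', Complex.mul_conj',
    ← Complex.ofReal_pow, ← Complex.ofReal_pow, Complex.sub_re, Complex.sub_re,
    Complex.re_mul_ofReal, Complex.re_mul_ofReal, Complex.re_mul_ofReal, Complex.ofReal_re]
    at henergy
  have hright : r.re * ‖φ b‖ ^ 2 ≤ ‖r‖ * M :=
    mul_le_mul (Complex.re_le_norm r) (hM b (right_mem_Icc.2 hab)) (by positivity) (by positivity)
  have hleft : -l.re * ‖φ a‖ ^ 2 ≤ ‖l‖ * M :=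
    mul_le_mul ((neg_le_abs _).trans (Complex.abs_re_le_norm l)) (hM a (left_mem_Icc.2 hab))
      (by positivity) (by positivity)
  have hpotential := h.neg_integral_potential_le hab hq hM
  rw [sq_weightedL2Norm hab hp0]
  linarith

theorem norm_integral_deriv_smul_le (h : IsSturmLiouvilleSolution p q w lam a b φ u)
    (hab : a ≤ b) (hp_pos : ∀ᵐ x ∂volume.restrict (Ioc a b), 0 < p x)
    (hp : IntervalIntegrable (fun t => 1 / p t) volume a b) {g' : ℝ → ℝ}
    (hg' : IntervalIntegrable (fun t => p t * g' t ^ 2) volume a b) {M : ℝ}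
    (hM : ∀ x ∈ Icc a b, ‖φ x‖ ^ 2 ≤ M) :
    ‖∫ t in a..b, g' t • (u t * conj (φ t))‖
      ≤ √(∫ t in a..b, p t * g' t ^ 2) * (√M * weightedL2Norm (fun t => 1 / p t) a b u) := by
  have hM0 : 0 ≤ M := (sq_nonneg _).trans (hM a (left_mem_Icc.2 hab))
  refine (intervalIntegral.norm_integral_le_integral_norm hab).trans ?_
  rw [weightedL2Norm, ← Real.sqrt_mul hM0, ← intervalIntegral.integral_const_mul]
  simp only [intervalIntegral.integral_of_le hab]
  refine integral_norm_le_sqrt_mul_sqrt hg'.1 ((h.intervalIntegrable_kinetic hp).1.const_mul M)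
    ?_ ?_ ?_
  · filter_upwards [hp_pos] with t ht
    simp only [Pi.zero_apply]; positivity
  · filter_upwards [hp_pos] with t ht
    simp only [Pi.zero_apply]; positivity
  · filter_upwards [hp_pos, ae_restrict_mem measurableSet_Ioc] with t hpt ht
    calc ‖g' t • (u t * conj (φ t))‖ ^ 2 = g' t ^ 2 * ‖u t‖ ^ 2 * ‖φ t‖ ^ 2 := by
          rw [norm_smul, norm_mul, RCLike.norm_conj, mul_pow, mul_pow, Real.norm_eq_abs, sq_abs,
            mul_assoc]
      _ ≤ g' t ^ 2 * ‖u t‖ ^ 2 * M := by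
          gcongr
          exact hM t (Ioc_subset_Icc_self ht)
      _ = p t * g' t ^ 2 * (M * (1 / p t * ‖u t‖ ^ 2)) := by
          field_simp

theorem norm_mul_integral_le (h : IsSturmLiouvilleSolution p q w lam a b φ u)
    (hab : a ≤ b) (hp_pos : ∀ᵐ x ∂volume.restrict (Ioc a b), 0 < p x)
    (hp : IntervalIntegrable (fun t => 1 / p t) volume a b)
    (hq : IntervalIntegrable q volume a b) (hw : IntervalIntegrable w volume a b)
    {g g' : ℝ → ℝ} (hg : IsPrimitiveOn g g' a b) (hga : g a = 0) (hgb : g b = 0)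
    (hg' : IntervalIntegrable (fun t => p t * g' t ^ 2) volume a b) {B M : ℝ}
    (hB : ∀ x ∈ Icc a b, |g x| ≤ B) (hM : ∀ x ∈ Icc a b, ‖φ x‖ ^ 2 ≤ M) :
    ‖lam‖ * ∫ t in a..b, g t * (w t * ‖φ t‖ ^ 2)
      ≤ √(∫ t in a..b, p t * g' t ^ 2) * (√M * weightedL2Norm (fun t => 1 / p t) a b u)
        + (weightedL2Norm (fun t => 1 / p t) a b u ^ 2 + M * ∫ t in a..b, |q t|) * B := by
  have hp0 : 0 ≤ᵐ[volume.restrict (Ioc a b)] fun t => 1 / p t :=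
    hp_pos.mono fun t ht => one_div_nonneg.2 ht.le
  have hcross := h.norm_integral_deriv_smul_le hab hp_pos hp hg' hM
  have hkinetic : |∫ t in a..b, g t * (1 / p t * ‖u t‖ ^ 2)|
      ≤ B * weightedL2Norm (fun t => 1 / p t) a b u ^ 2 := by
    rw [sq_weightedL2Norm hab hp0]
    refine abs_integral_mul_le hab (h.intervalIntegrable_kinetic hp) hB ?_
    filter_upwards [hp0] with t ht
    exact (abs_of_nonneg (mul_nonneg ht (sq_nonneg _))).le
  have hpotential : |∫ t in a..b, g t * (q t * ‖φ t‖ ^ 2)| ≤ B * (M * ∫ t in a..b, |q t|) := by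
    rw [← intervalIntegral.integral_const_mul]
    refine abs_integral_mul_le hab (hq.abs.const_mul M) hB ?_
    filter_upwards [ae_restrict_mem measurableSet_Ioc] with t ht
    rw [abs_mul, abs_of_nonneg (sq_nonneg ‖φ t‖), mul_comm]
    gcongr
    exact hM t (Ioc_subset_Icc_self ht)
  calc ‖lam‖ * ∫ t in a..b, g t * (w t * ‖φ t‖ ^ 2)
      ≤ ‖lam * ((∫ t in a..b, g t * (w t * ‖φ t‖ ^ 2) : ℝ) : ℂ)‖ := by
        rw [norm_mul, Complex.norm_real]
        gcongr
        exact Real.le_norm_self _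
    _ ≤ ‖∫ t in a..b, g' t • (u t * conj (φ t))‖
        + |(∫ t in a..b, g t * (1 / p t * ‖u t‖ ^ 2)) + ∫ t in a..b, g t * (q t * ‖φ t‖ ^ 2)| := by
        rw [h.weighted_energy_identity hp hq hw hg hga hgb, ← Real.norm_eq_abs,
          ← Complex.norm_real]
        exact norm_add_le _ _
    _ ≤ _ := by
        have habs := abs_add_le (∫ t in a..b, g t * (1 / p t * ‖u t‖ ^ 2))
          (∫ t in a..b, g t * (q t * ‖φ t‖ ^ 2))
        linarith

theorem norm_mul_integral_le_mul_sq_weightedL2Norm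
    (h : IsSturmLiouvilleSolution p q w lam a b φ u)
    (hab : a ≤ b) (hp_pos : ∀ᵐ x ∂volume.restrict (Ioc a b), 0 < p x)
    (hp : IntervalIntegrable (fun t => 1 / p t) volume a b)
    (hq : IntervalIntegrable q volume a b) (hw : IntervalIntegrable w volume a b)
    {g g' : ℝ → ℝ} (hg : IsPrimitiveOn g g' a b) (hga : g a = 0) (hgb : g b = 0)
    (hg' : IntervalIntegrable (fun t => p t * g' t ^ 2) volume a b) {B β γ : ℝ}
    (hB : ∀ x ∈ Icc a b, |g x| ≤ B) (hγ : 0 ≤ γ)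
    (hD : weightedL2Norm (fun t => 1 / p t) a b u ≤ β * weightedL2Norm (fun t => 1 / p t) a b φ)
    (hsup : ∀ x ∈ Icc a b, ‖φ x‖ ^ 2 ≤ γ ^ 2 * weightedL2Norm (fun t => 1 / p t) a b φ ^ 2) :
    ‖lam‖ * ∫ t in a..b, g t * (w t * ‖φ t‖ ^ 2)
      ≤ (β * γ * √(∫ t in a..b, p t * g' t ^ 2) + (β ^ 2 + γ ^ 2 * ∫ t in a..b, |q t|) * B)
        * weightedL2Norm (fun t => 1 / p t) a b φ ^ 2 := by
  set N := weightedL2Norm (fun t => 1 / p t) a b φ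
  have hN : 0 ≤ N := weightedL2Norm_nonneg φ
  have hD0 : 0 ≤ weightedL2Norm (fun t => 1 / p t) a b u := weightedL2Norm_nonneg u
  have hB0 : 0 ≤ B := (abs_nonneg _).trans (hB a (left_mem_Icc.2 hab))
  have hupper := h.norm_mul_integral_le hab hp_pos hp hq hw hg hga hgb hg' hB hsup
  rw [← mul_pow, Real.sqrt_sq (mul_nonneg hγ hN), mul_pow] at hupper
  calc _ ≤ _ := hupper
    _ ≤ √(∫ t in a..b, p t * g' t ^ 2) * (γ * N * (β * N))
        + ((β * N) ^ 2 + γ ^ 2 * N ^ 2 * ∫ t in a..b, |q t|) * B := by gcongr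
    _ = _ := by ring

theorem weightedL2Norm_quasiDeriv_le_and_sq_norm_le
    (h : IsSturmLiouvilleSolution p q w lam a b φ u) (hab : a < b)
    (hp_pos : ∀ᵐ x ∂volume.restrict (Ioc a b), 0 < p x)
    (hp : IntervalIntegrable (fun t => 1 / p t) volume a b)
    (hq : IntervalIntegrable q volume a b) (hw : IntervalIntegrable w volume a b) {l r : ℂ}
    (hua : u a = l * φ a) (hub : u b = r * φ b)
    (hsign : lam.re * ∫ t in a..b, w t * ‖φ t‖ ^ 2 ≤ 0) {α β : ℝ}
    (hα : α = ‖l‖ + ‖r‖ + ∫ t in a..b, |min (q t) 0|)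
    (hβ : β = √(α * (1 / (∫ t in a..b, 1 / p t) + α)) + α) :
    weightedL2Norm (fun t => 1 / p t) a b u ≤ β * weightedL2Norm (fun t => 1 / p t) a b φ ∧
      ∀ x ∈ Icc a b, ‖φ x‖ ^ 2 ≤ (2 * β + 1 / ∫ t in a..b, 1 / p t)
        * weightedL2Norm (fun t => 1 / p t) a b φ ^ 2 := by
  have hp0 : 0 ≤ᵐ[volume.restrict (Ioc a b)] fun t => 1 / p t :=
    hp_pos.mono fun t ht => one_div_nonneg.2 ht.le
  have hP : 0 < ∫ t in a..b, 1 / p t :=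
    intervalIntegral_pos_of_ae_pos hab hp (hp_pos.mono fun t ht => one_div_pos.2 ht)
  have hα0 : 0 ≤ α := by
    have := intervalIntegral.integral_nonneg (μ := volume) hab.le fun t _ =>
      abs_nonneg (min (q t) 0)
    rw [hα]
    positivity
  obtain ⟨x₀, hx₀, hmax⟩ := isCompact_Icc.exists_isMaxOn (nonempty_Icc.2 hab.le)
    (uIcc_of_le hab.le ▸ h.isPrimitiveOn.continuousOn.norm.pow 2)
  have haverage := h.isPrimitiveOn.sq_norm_mul_integral_le hab.le hp hp0
    h.isPrimitiveOn_quasiDeriv.continuousOn hx₀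
  have henergy := h.sq_weightedL2Norm_quasiDeriv_le hab.le hp0 hp hq hw hua hub hsign
    (M := ‖φ x₀‖ ^ 2) fun x hx => hmax hx
  rw [← hα] at henergy
  have hD := hβ ▸ le_mul_of_sq_le_of_mul_le hα0 hP (weightedL2Norm_nonneg φ) henergy haverage
  exact ⟨hD, fun x hx => (hmax hx).trans
    (le_mul_sq_of_mul_le hP (weightedL2Norm_nonneg φ) hD haverage)⟩

end IsSturmLiouvilleSolution

end SturmLiouville

theorem exceptional_eigenvalue_bounds_separated_general
    {a b : ℝ} (hab : a < b) {p q w : ℝ → ℝ}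
    (hp_pos : ∀ᵐ x ∂volume.restrict (Set.Ioc a b), 0 < p x)
    (hp : IntervalIntegrable (fun t => 1 / p t) volume a b)
    (hq : IntervalIntegrable q volume a b) (hw : IntervalIntegrable w volume a b)
    {l r : ℂ} {α β γ : ℝ}
    (hα : α = ‖l‖ + ‖r‖ + ∫ t in a..b, |min (q t) 0|)
    (hβ : β = √(α * (1 / (∫ t in a..b, 1 / p t) + α)) + α)
    (hγ : γ = √(2 * β + 1 / (∫ t in a..b, 1 / p t)))
    {g g' : ℝ → ℝ} (hg : IsPrimitiveOn g g' a b) (hga : g a = 0) (hgb : g b = 0)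
    (hg' : IntervalIntegrable (fun t => p t * g' t ^ 2) volume a b)
    (hgw : ∀ᵐ x ∂volume.restrict (Set.Ioc a b), 0 < g x * w x)
    {ε : ℝ} (hε : 0 < ε)
    (hεcond : (volume.withDensity fun x => ENNReal.ofReal (1 / p x))
        {x | x ∈ Set.Icc a b ∧ p x * g x * w x < ε} ≤ ENNReal.ofReal (1 / (2 * γ ^ 2)))
    {lam : ℂ} {φ u : ℝ → ℂ} (h : IsSturmLiouvilleSolution p q w lam a b φ u)
    (hφ : ∃ x ∈ Set.Icc a b, φ x ≠ 0) (hua : u a = l * φ a) (hub : u b = r * φ b)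
    (hsign : lam.re * ∫ t in a..b, w t * ‖φ t‖ ^ 2 ≤ 0) :
    ‖lam‖ ≤ 2 / ε * (β * γ * √(∫ t in a..b, p t * g' t ^ 2)
      + (β ^ 2 + γ ^ 2 * ∫ t in a..b, |q t|) * sSup ((fun x => |g x|) '' Set.Icc a b)) := by
  set N := weightedL2Norm (fun t => 1 / p t) a b φ
  obtain ⟨hD, hsup⟩ :=
    h.weightedL2Norm_quasiDeriv_le_and_sq_norm_le hab hp_pos hp hq hw hua hub hsign hα hβ
  obtain ⟨x, hx, hφx⟩ := hφ
  have hpos : 0 < (2 * β + 1 / ∫ t in a..b, 1 / p t) * N ^ 2 :=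
    (pow_pos (norm_pos_iff.2 hφx) 2).trans_le (hsup x hx)
  have hγsq : γ ^ 2 = 2 * β + 1 / ∫ t in a..b, 1 / p t :=
    hγ ▸ Real.sq_sqrt (pos_of_mul_pos_left hpos (sq_nonneg N)).le
  rw [← hγsq] at hsup hpos
  have hgB : ∀ y ∈ Set.Icc a b, |g y| ≤ sSup ((fun x => |g x|) '' Set.Icc a b) := fun y hy =>
    le_csSup (isCompact_Icc.bddAbove_image (Set.uIcc_of_le hab.le ▸ hg.continuousOn.abs))
      (Set.mem_image_of_mem _ hy)
  have hlower := half_mul_sq_weightedL2Norm_le hab.le hp_pos hp hgw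
    ((h.intervalIntegrable_potential hw).continuousOn_mul hg.continuousOn) hε
    (pos_of_mul_pos_left hpos (sq_nonneg N)) hεcond hsup
  have hupper := h.norm_mul_integral_le_mul_sq_weightedL2Norm hab.le hp_pos hp hq hw hg hga hgb hg'
    hgB (hγ ▸ Real.sqrt_nonneg _) hD hsup
  have hscaled := (mul_le_mul_of_nonneg_left hlower (norm_nonneg lam)).trans hupper
  rw [← mul_assoc] at hscaled
  rw [div_mul_eq_mul_div, le_div_iff₀ hε]
  linarith [le_of_mul_le_mul_right hscaled (pos_of_mul_pos_right hpos (sq_nonneg γ))]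

/-- Theorem 4.3 of the paper (for separated self-adjoint boundary conditions):
bound on the real exceptional eigenvalues of the indefinite
Sturm–Liouville problem. -/
theorem exceptional_eigenvalue_bounds_separated
    (a b : ℝ) (hab : a < b) (p q w : ℝ → ℝ)
    (hpm : Measurable p) (hqm : Measurable q) (hwm : Measurable w)
    (hp_pos : ∀ᵐ x ∂(volume.restrict (Set.Ioc a b)), 0 < p x)
    (hp_int : IntegrableOn (fun x => 1 / p x) (Set.Ioc a b))
    (hq_int : IntegrableOn q (Set.Ioc a b))
    (hw_int : IntegrableOn w (Set.Ioc a b))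
    (hw_ne : ∀ᵐ x ∂(volume.restrict (Set.Ioc a b)), w x ≠ 0)
    (hw_pos : 0 < volume {x ∈ Set.Ioc a b | 0 < w x})
    (hw_neg : 0 < volume {x ∈ Set.Ioc a b | w x < 0})
    (l r : ℝ) (c α β γ : ℝ)
    (hc : c = |l| + |r|)
    (hα : α = c + ∫ t in a..b, |min (q t) 0|)
    (hβ : β = Real.sqrt (α * (1 / (∫ t in a..b, 1 / p t) + α)) + α)
    (hγ : γ = Real.sqrt (2 * β + 1 / (∫ t in a..b, 1 / p t)))
    -- the comparison function g, absolutely continuous with a.e. derivative g'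
    (g g' : ℝ → ℝ) (hg'm : Measurable g')
    (hg'int : IntegrableOn g' (Set.Icc a b))
    (hgAC : ∀ x ∈ Set.Icc a b, g x = g a + ∫ t in a..x, g' t)
    (hga : g a = 0) (hgb : g b = 0)
    (hg'2 : IntegrableOn (fun t => p t * g' t ^ 2) (Set.Ioc a b))
    (hgw : ∀ᵐ x ∂(volume.restrict (Set.Ioc a b)), 0 < g x * w x)
    (ε : ℝ) (hε : 0 < ε)
    (hεcond : (volume.withDensity fun x => ENNReal.ofReal (1 / p x))
        {x | x ∈ Set.Icc a b ∧ p x * g x * w x < ε} ≤ ENNReal.ofReal (1 / (2 * γ ^ 2))) :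
    ∀ lam : ℝ, lam ≠ 0 →
      ∀ φ u : ℝ → ℂ,
        ContinuousOn φ (Set.Icc a b) → ContinuousOn u (Set.Icc a b) →
        (∀ x ∈ Set.Icc a b, φ x = φ a + ∫ t in a..x, u t / (p t : ℂ)) →
        (∀ x ∈ Set.Icc a b,
            u x = u a + ∫ t in a..x, ((q t : ℂ) - (lam : ℂ) * (w t : ℂ)) * φ t) →
        (∃ x ∈ Set.Icc a b, φ x ≠ 0) →
        u a = (l : ℂ) * φ a → u b = (r : ℂ) * φ b →
        lam * (∫ t in a..b, w t * ‖φ t‖ ^ 2) ≤ 0 →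
        |lam| ≤ 2 / ε *
            (β * γ * Real.sqrt (∫ t in a..b, p t * g' t ^ 2)
              + (β ^ 2 + γ ^ 2 * ∫ t in a..b, |q t|)
                  * sSup ((fun x => |g x|) '' Set.Icc a b)) := by
  intro lam _ φ u _ hu hφeq hueq hφ hua hub hsign
  subst hc
  have toInterval {f : ℝ → ℝ} (hf : IntegrableOn f (Set.Ioc a b)) :
      IntervalIntegrable f volume a b :=
    (intervalIntegrable_iff_integrableOn_Ioc_of_le hab.le).2 hf
  have hp := toInterval hp_int
  have hq := toInterval hq_int
  have hw := toInterval hw_int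
  have hg := IsPrimitiveOn.of_integrableOn_Ioc hab.le (hg'int.mono_set Set.Ioc_subset_Icc_self) hgAC
  simpa using exceptional_eigenvalue_bounds_separated_general hab hp_pos hp hq hw
    (l := l) (r := r) (by simpa using hα) hβ hγ hg hga hgb (toInterval hg'2) hgw hε hεcond
    (.of_continuousOn hab.le hp hq hw hu hφeq hueq) hφ hua hub (by simpa using hsign)
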